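/- For a single qudit of prime dimension p, every m ≥ 1 and every a with 1 ≤ a ≤ p−1, the group D_{m,a} is contained in the set C^{(p−1)(m−1)+a}_d of diagonal gates in level (p−1)(m−1)+a of the Clifford hierarchy. -/

import Mathlib

/-!
A gate of `D_{m,a}` is diagonal with entries `z · exp(2πi f(j) / p^m)`, where `f` is integer-valued
and `f mod p` is a polynomial function of degree at most `a` on the field `ZMod p`: the generators
`U_{m,b}` contribute `j^b`, while the factor in `D_{m-1,p-1}` contributes multiples of `p`. Only
this larger class of gates (`PhasePoly`) is shown to lie in the hierarchy.

Conjugating a Pauli operator `Q` of shift `s` by `diagonal u` gives the diagonal gate with entries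
`u(j) / u(j - s)` times `Q` (`diagonal_conj_pauli`). Its exponent is a finite difference of `f`, so
the degree mod `p` drops by one (`PhasePoly.diff`). In degree zero `f` is a constant plus a multiple
of `p`, so the denominator drops to `p^(m-1)`; the new numerator is an arbitrary integer function,
hence by Lagrange interpolation polynomial mod `p` of degree at most `p - 1` (`PhasePoly.descend`).
Each step lowers `(p-1)(m-1)+a` by exactly one and ends at `m = a = 1`, where the gate is a power
of `Z` up to phase (`PhasePoly.eq_weyl`). The remaining Pauli factor is harmless because Pauli
operators commute up to phases (`pauli_conj`).
-/

open Matrix Complex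

/-- Single-qudit shift gate `X |j⟩ = |j+1⟩` on a qudit of dimension `p`. -/
noncomputable def Xmat1 (p : ℕ) [NeZero p] : Matrix (ZMod p) (ZMod p) ℂ :=
  Matrix.of fun r c => if r = c + 1 then 1 else 0

/-- Single-qudit phase gate `Z |j⟩ = ω^j |j⟩`, `ω = exp(2πi/p)`. -/
noncomputable def Zmat1 (p : ℕ) [NeZero p] : Matrix (ZMod p) (ZMod p) ℂ :=
  Matrix.of fun r c =>
    if r = c then Complex.exp (2 * Real.pi * Complex.I * ((c.val : ℂ) / (p : ℂ))) else 0

/-- The phase of the Pauli group generators: `i` if `p = 2`, `ω = exp(2πi/p)` if `p > 2`. -/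
noncomputable def pauliPhase (p : ℕ) : ℂ :=
  if p = 2 then Complex.I else Complex.exp (2 * Real.pi * Complex.I / (p : ℂ))

/-- The single-qudit Pauli group `⟨iI, X, Z⟩` (`p = 2`) or `⟨ωI, X, Z⟩` (`p > 2`).
All generators have finite order, so the monoid they generate is already a group. -/
noncomputable def Pauli1 (p : ℕ) [NeZero p] : Set (Matrix (ZMod p) (ZMod p) ℂ) :=
  ↑(Submonoid.closure {pauliPhase p • (1 : Matrix (ZMod p) (ZMod p) ℂ), Xmat1 p, Zmat1 p})

/-- The Clifford hierarchy on a single qudit: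
`C^1 = {e^{iφ} P : P ∈ P}`, and `C^k = {U unitary | U P U† ∈ C^{k-1} ∀ P ∈ P}` for `k ≥ 2`. -/
noncomputable def Cliff1 (p : ℕ) [NeZero p] : ℕ → Set (Matrix (ZMod p) (ZMod p) ℂ)
  | 0 => ∅
  | 1 => {U | ∃ φ : ℝ, ∃ P ∈ Pauli1 p, U = Complex.exp (φ * Complex.I) • P}
  | (k + 2) => {U | U ∈ Matrix.unitaryGroup (ZMod p) ℂ ∧
      ∀ P ∈ Pauli1 p, U * P * Uᴴ ∈ Cliff1 p (k + 1)}

/-- The diagonal gates in the `k`-th level of the single-qudit Clifford hierarchy. -/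
noncomputable def CliffD1 (p : ℕ) [NeZero p] (k : ℕ) : Set (Matrix (ZMod p) (ZMod p) ℂ) :=
  {U | U ∈ Cliff1 p k ∧ U.IsDiag}

/-- The gate `U_{m,a} = Σ_j exp(2πi j^a / p^m) |j⟩⟨j|`, powers computed with the
integer representative `0 ≤ j ≤ p-1`. -/
noncomputable def Uma (p : ℕ) [NeZero p] (m a : ℕ) : Matrix (ZMod p) (ZMod p) ℂ :=
  Matrix.of fun r c =>
    if r = c then Complex.exp (2 * Real.pi * Complex.I * ((r.val : ℂ) ^ a / (p : ℂ) ^ m)) else 0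

/-- The group `D_{m,a} = ⟨U_{m,b} : 1 ≤ b ≤ a⟩ ⬝ {e^{iφ} I} ⬝ D_{m-1,p-1}`, with the
convention `D_{0,·} = {e^{iφ} I}`.  The generators `U_{m,b}` have finite order, so the
monoid they generate is already the group they generate. -/
noncomputable def Dgrp (p : ℕ) [NeZero p] : ℕ → ℕ → Set (Matrix (ZMod p) (ZMod p) ℂ)
  | 0, _ => {U | ∃ φ : ℝ, U = Complex.exp (φ * Complex.I) • 1}
  | (m + 1), a =>
    {W | ∃ G ∈ Submonoid.closure {V | ∃ b, 1 ≤ b ∧ b ≤ a ∧ V = Uma p (m + 1) b},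
      ∃ φ : ℝ, ∃ D ∈ Dgrp p m (p - 1),
        W = Complex.exp (φ * Complex.I) • (G * D)}

/-- The Weyl operator `X^s Z^t`, with entries `δ_{r, c+s} ω^{tc}`. -/
noncomputable def weyl (p : ℕ) [NeZero p] (s t : ZMod p) : Matrix (ZMod p) (ZMod p) ℂ :=
  Matrix.of fun r c => if r = c + s then ZMod.stdAddChar (t * c) else 0

/-- Phase functions `u j = z · exp(2πi f(j) / p^m)`, where `z` is a global phase and `f` is an
integer-valued function whose reduction mod `p` is a polynomial function of degree at most `a`
over the field `ZMod p`. No condition is put on `f` beyond its residues mod `p`. -/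
def PhasePoly (p m a : ℕ) (u : ZMod p → ℂ) : Prop :=
  ∃ z : ℂ, ‖z‖ = 1 ∧ ∃ f : ZMod p → ℤ, ∃ Q : Polynomial (ZMod p), Q.natDegree ≤ a ∧
    (∀ j, (f j : ZMod p) = Q.eval j) ∧
    ∀ j, u j = z * Complex.exp (2 * Real.pi * Complex.I * ((f j : ℂ) / (p : ℂ) ^ m))

/-! ### Weyl operators and the Pauli group -/

lemma weyl_mul (p : ℕ) [NeZero p] (s t s' t' : ZMod p) :
    weyl p s t * weyl p s' t' = ZMod.stdAddChar (t * s') • weyl p (s + s') (t + t') := by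
  ext r c
  rw [Matrix.mul_apply, Finset.sum_eq_single (c + s')]
  · have h : r = c + s' + s ↔ r = c + (s + s') := by
      rw [show c + s' + s = c + (s + s') by ring]
    simp only [weyl, Matrix.of_apply, Matrix.smul_apply, h, smul_eq_mul, if_true]
    split_ifs
    · rw [← AddChar.map_add_eq_mul, ← AddChar.map_add_eq_mul]
      congr 1; ring
    · simp
  · intro b _ hb
    simp [weyl, hb]
  · simp

lemma weyl_zero (p : ℕ) [NeZero p] : weyl p 0 0 = 1 := by
  ext r c
  simp [weyl, Matrix.one_apply]

lemma weyl_unitary (p : ℕ) [NeZero p] (s t : ZMod p) :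
    weyl p s t * (weyl p s t)ᴴ = 1 := by
  ext r c
  rw [Matrix.mul_apply, Finset.sum_eq_single (r - s)]
  · by_cases h : r = c
    · subst h
      simp [weyl, Complex.mul_conj, Complex.normSq_eq_norm_sq]
    · have : ¬ (c = r) := fun h' => h h'.symm
      simp [weyl, h, this]
  · intro b _ hb
    have : ¬ (r = b + s) := fun h' => hb (by rw [h']; ring)
    simp [weyl, this]
  · simp

lemma Xmat1_eq (p : ℕ) [NeZero p] : Xmat1 p = weyl p 1 0 := by
  ext r c
  simp [weyl, Xmat1]

lemma Zmat1_eq (p : ℕ) [NeZero p] : Zmat1 p = weyl p 0 1 := by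
  ext r c
  simp only [weyl, Zmat1, Matrix.of_apply, add_zero, one_mul]
  congr 1
  have h := ZMod.stdAddChar_coe (N := p) (c.val : ℤ)
  rw [Int.cast_natCast, ZMod.natCast_zmod_val] at h
  rw [h]
  congr 1
  push_cast
  ring

lemma norm_pauliPhase (p : ℕ) : ‖pauliPhase p‖ = 1 := by
  unfold pauliPhase
  split_ifs
  · simp
  · rw [show (2 * Real.pi * Complex.I / (p : ℂ)) = ((2 * Real.pi / p : ℝ) : ℂ) * Complex.I by
      push_cast; ring]
    exact Complex.norm_exp_ofReal_mul_I _

lemma pauli_normal_form (p : ℕ) [NeZero p] {P : Matrix (ZMod p) (ZMod p) ℂ}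
    (hP : P ∈ Pauli1 p) : ∃ z : ℂ, ‖z‖ = 1 ∧ ∃ s t, P = z • weyl p s t := by
  induction hP using Submonoid.closure_induction with
  | mem x hx =>
    rcases hx with rfl | rfl | rfl
    · exact ⟨_, norm_pauliPhase p, 0, 0, by rw [weyl_zero]⟩
    · exact ⟨1, by simp, 1, 0, by rw [Xmat1_eq, one_smul]⟩
    · exact ⟨1, by simp, 0, 1, by rw [Zmat1_eq, one_smul]⟩
  | one => exact ⟨1, by simp, 0, 0, by rw [weyl_zero, one_smul]⟩
  | mul x y _ _ hx hy =>
    obtain ⟨z, hz, s, t, rfl⟩ := hx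
    obtain ⟨z', hz', s', t', rfl⟩ := hy
    refine ⟨z * z' * ZMod.stdAddChar (t * s'), by simp [hz, hz'], s + s', t + t', ?_⟩
    rw [Matrix.smul_mul, Matrix.mul_smul, weyl_mul, smul_smul, smul_smul]

lemma pauli_unitary (p : ℕ) [NeZero p] {P : Matrix (ZMod p) (ZMod p) ℂ}
    (hP : P ∈ Pauli1 p) : P * Pᴴ = 1 := by
  obtain ⟨z, hz, s, t, rfl⟩ := pauli_normal_form p hP
  rw [Matrix.conjTranspose_smul, Matrix.smul_mul, Matrix.mul_smul, weyl_unitary, smul_smul]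
  simp [Complex.mul_conj, Complex.normSq_eq_norm_sq, hz]

/-- Pauli operators commute up to a phase, so conjugation by one fixes the others up to phase. -/
lemma pauli_conj (p : ℕ) [NeZero p] {P Q : Matrix (ZMod p) (ZMod p) ℂ}
    (hP : P ∈ Pauli1 p) (hQ : Q ∈ Pauli1 p) : ∃ w : ℂ, ‖w‖ = 1 ∧ P * Q * Pᴴ = w • Q := by
  have hu := pauli_unitary p hP
  obtain ⟨z, hz, s, t, rfl⟩ := pauli_normal_form p hP
  obtain ⟨z', hz', s', t', rfl⟩ := pauli_normal_form p hQ
  refine ⟨ZMod.stdAddChar (t * s' - t' * s), by simp, ?_⟩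
  have hc : (z • weyl p s t) * (z' • weyl p s' t') =
      ZMod.stdAddChar (t * s' - t' * s) • ((z' • weyl p s' t') * (z • weyl p s t)) := by
    simp only [Matrix.smul_mul, Matrix.mul_smul, weyl_mul, smul_smul]
    rw [add_comm s' s, add_comm t' t]
    congr 1
    have : (ZMod.stdAddChar (t * s') : ℂ) =
        ZMod.stdAddChar (t * s' - t' * s) * ZMod.stdAddChar (t' * s) := by
      rw [← AddChar.map_add_eq_mul]; congr 1; ring
    rw [this]; ring
  rw [hc, Matrix.smul_mul, Matrix.mul_assoc, hu, Matrix.mul_one]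

lemma weyl_diag_mem (p : ℕ) [NeZero p] (n : ℕ) : weyl p 0 (n : ZMod p) ∈ Pauli1 p := by
  induction n with
  | zero =>
    rw [Nat.cast_zero, weyl_zero]
    exact Submonoid.one_mem _
  | succ n ih =>
    have h : weyl p 0 (n : ZMod p) * Zmat1 p = weyl p 0 ((n + 1 : ℕ) : ZMod p) := by
      rw [Zmat1_eq, weyl_mul]; simp
    rw [← h]
    exact Submonoid.mul_mem _ ih (Submonoid.subset_closure (by simp))

/-! ### Polynomial phase functions -/

lemma natDegree_sub_shift_le {K : Type*} [Field K] (Q : Polynomial K) (s : K) (a : ℕ)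
    (h : Q.natDegree ≤ a + 1) : (Q - Polynomial.taylor (-s) Q).natDegree ≤ a := by
  by_cases h0 : Q = 0
  · simp [h0]
  rcases Nat.eq_zero_or_pos Q.natDegree with hd | hd
  · rw [Polynomial.eq_C_of_natDegree_eq_zero hd]; simp
  have hlt : (Q - Polynomial.taylor (-s) Q).degree < Q.degree :=
    Polynomial.degree_sub_lt_left (by simp) h0 (by simp)
  rcases eq_or_ne (Q - Polynomial.taylor (-s) Q) 0 with h1 | h1
  · simp [h1]
  · have := Polynomial.natDegree_lt_natDegree h1 hlt
    omega

lemma norm_phase (p m : ℕ) (k : ℤ) :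
    ‖Complex.exp (2 * Real.pi * Complex.I * ((k : ℂ) / (p : ℂ) ^ m))‖ = 1 := by
  rw [show (2 * Real.pi * Complex.I * ((k : ℂ) / (p : ℂ) ^ m)) =
    ((2 * Real.pi * (k / p ^ m) : ℝ) : ℂ) * Complex.I by push_cast; ring]
  exact Complex.norm_exp_ofReal_mul_I _

lemma PhasePoly.norm_eq_one {p m a : ℕ} {u : ZMod p → ℂ} (h : PhasePoly p m a u) (j : ZMod p) :
    ‖u j‖ = 1 := by
  obtain ⟨z, hz, f, Q, -, -, hu⟩ := h
  rw [hu, norm_mul, hz, norm_phase, one_mul]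

lemma PhasePoly.const_mul {p m a : ℕ} {u : ZMod p → ℂ} (h : PhasePoly p m a u) {w : ℂ}
    (hw : ‖w‖ = 1) : PhasePoly p m a (fun j => w * u j) := by
  obtain ⟨z, hz, f, Q, hQ, hf, hu⟩ := h
  exact ⟨w * z, by simp [hw, hz], f, Q, hQ, hf, fun j => by simp only [hu, mul_assoc]⟩

/-- The finite difference of a polynomial phase has degree one less. -/
lemma PhasePoly.diff {p m a : ℕ} [Fact p.Prime] {u : ZMod p → ℂ} (h : PhasePoly p m (a + 1) u)
    (s : ZMod p) : PhasePoly p m a (fun j => u j * star (u (j - s))) := by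
  obtain ⟨z, hz, f, Q, hQ, hf, hu⟩ := h
  refine ⟨1, by simp, fun j => f j - f (j - s), Q - Polynomial.taylor (-s) Q,
    natDegree_sub_shift_le Q s a hQ, fun j => ?_, fun j => ?_⟩
  · rw [Int.cast_sub, hf, hf, Polynomial.eval_sub, Polynomial.taylor_eval, sub_eq_add_neg j s]
  · have hinv : ∀ w : ℂ, ‖w‖ = 1 → star w = w⁻¹ := fun w hw =>
      (Complex.inv_eq_conj hw).symm
    have hz0 : z ≠ 0 := fun h0 => by simp [h0] at hz
    simp only [hu, star_mul', hinv z hz, hinv _ (norm_phase p m _), ← Complex.exp_neg]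
    rw [mul_mul_mul_comm, mul_inv_cancel₀ hz0, ← Complex.exp_add]
    congr 2
    push_cast
    ring

/-- A phase `f / p^(m+1)` with `f` constant mod `p` is a global phase times some `g / p^m`;
as every function on `ZMod p` is polynomial of degree at most `p - 1`, so is `g` mod `p`. -/
lemma PhasePoly.descend {p m : ℕ} [Fact p.Prime] {u : ZMod p → ℂ} (h : PhasePoly p (m + 1) 0 u) :
    PhasePoly p m (p - 1) u := by
  obtain ⟨z, hz, f, Q, hQ, hf, hu⟩ := h
  have hp0 : (p : ℂ) ≠ 0 := Nat.cast_ne_zero.2 (Fact.out : p.Prime).ne_zero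
  have hdvd : ∀ j, (p : ℤ) ∣ f j - f 0 := fun j => by
    rw [← ZMod.intCast_zmod_eq_zero_iff_dvd, Int.cast_sub, hf, hf,
      Polynomial.eq_C_of_natDegree_le_zero hQ]
    simp
  choose g hg using hdvd
  refine ⟨z * Complex.exp (2 * Real.pi * Complex.I * ((f 0 : ℂ) / (p : ℂ) ^ (m + 1))),
    by rw [norm_mul, hz, norm_phase, one_mul], g,
    Lagrange.interpolate Finset.univ id (fun j => (g j : ZMod p)), ?_, fun j => ?_, fun j => ?_⟩
  · have hd := Lagrange.degree_interpolate_le (s := (Finset.univ : Finset (ZMod p))) (v := id)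
      (fun j => (g j : ZMod p)) (Function.injective_id.injOn)
    rw [Finset.card_univ, ZMod.card] at hd
    exact Polynomial.natDegree_le_iff_degree_le.2 hd
  · exact (Lagrange.eval_interpolate_at_node (s := (Finset.univ : Finset (ZMod p))) (v := id)
      (fun j => (g j : ZMod p)) (Function.injective_id.injOn) (Finset.mem_univ j)).symm
  · have hfj : (f j : ℂ) = f 0 + p * g j := by
      have := hg j
      exact_mod_cast (by linarith : f j = f 0 + p * g j)
    rw [hu, mul_assoc z, ← Complex.exp_add, hfj]
    congr 2
    field_simp
    ring

/-- An affine phase at `m = 1` is a power of `Z`, up to a global phase. -/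
lemma PhasePoly.eq_weyl {p : ℕ} [Fact p.Prime] {u : ZMod p → ℂ} (h : PhasePoly p 1 1 u) :
    ∃ z : ℂ, ‖z‖ = 1 ∧ ∃ n : ℕ, Matrix.diagonal u = z • weyl p 0 (n : ZMod p) := by
  obtain ⟨z, hz, f, Q, hQ, hf, hu⟩ := h
  refine ⟨z * ZMod.stdAddChar (Q.coeff 0), by simp [hz], (Q.coeff 1).val, ?_⟩
  ext r c
  by_cases hrc : r = c
  · subst hrc
    rw [Matrix.diagonal_apply_eq, hu]
    have he := ZMod.stdAddChar_coe (N := p) (f r)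
    rw [hf, Polynomial.eq_X_add_C_of_natDegree_le_one hQ] at he
    simp only [Polynomial.eval_add, Polynomial.eval_mul, Polynomial.eval_C, Polynomial.eval_X,
      AddChar.map_add_eq_mul] at he
    simp only [weyl, Matrix.smul_apply, Matrix.of_apply, add_zero, if_true, smul_eq_mul,
      ZMod.natCast_zmod_val]
    rw [mul_assoc z, mul_comm (ZMod.stdAddChar (Q.coeff 0)), he]
    congr 2
    ring
  · simp [weyl, hrc]

/-! ### Membership in the hierarchy -/

lemma smul_pauli_mem_Cliff1_one (p : ℕ) [NeZero p] {z : ℂ} (hz : ‖z‖ = 1)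
    {P : Matrix (ZMod p) (ZMod p) ℂ} (hP : P ∈ Pauli1 p) : z • P ∈ Cliff1 p 1 := by
  obtain ⟨φ, rfl⟩ := (Complex.norm_eq_one_iff z).1 hz
  exact ⟨φ, P, hP, rfl⟩

/-- Conjugating a Pauli operator `Q`, of shift `s`, by `diagonal u` multiplies it on the left by
the diagonal gate of finite differences of `u` along `s`. -/
lemma diagonal_conj_pauli (p : ℕ) [NeZero p] {Q : Matrix (ZMod p) (ZMod p) ℂ}
    (hQ : Q ∈ Pauli1 p) : ∃ s : ZMod p, ∀ u : ZMod p → ℂ,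
      Matrix.diagonal u * Q * (Matrix.diagonal u)ᴴ =
        Matrix.diagonal (fun j => u j * star (u (j - s))) * Q := by
  obtain ⟨z, -, s, t, rfl⟩ := pauli_normal_form p hQ
  refine ⟨s, fun u => ?_⟩
  ext r c
  rw [Matrix.diagonal_conjTranspose, Matrix.mul_diagonal, Matrix.diagonal_mul,
    Matrix.diagonal_mul]
  by_cases h : r = c + s
  · subst h
    simp only [add_sub_cancel_right, Pi.star_apply]
    ring
  · simp [weyl, h]

/-- The induction on the level: right multiplication by Pauli operators is carried along, since
conjugating a Pauli operator by a diagonal gate yields a diagonal gate times a Pauli operator.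
The denominator is `p^(m+1)`, so `(p - 1) * m + a` is the level of `D_{m+1,a}`. -/
lemma PhasePoly.diagonal_mul_pauli_mem {p : ℕ} [Fact p.Prime] (k : ℕ) :
    ∀ m a : ℕ, 1 ≤ a → k = (p - 1) * m + a →
      ∀ u : ZMod p → ℂ, PhasePoly p (m + 1) a u → ∀ P ∈ Pauli1 p,
        Matrix.diagonal u * P ∈ Cliff1 p k := by
  have hp2 : 2 ≤ p := (Fact.out : p.Prime).two_le
  induction k with
  | zero => intro m a ha hk; omega
  | succ k ih =>
    intro m a ha hk u hu P hP
    rcases k with _ | k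
    · have ha1 : a = 1 := by omega
      have hm : m = 0 := by
        have h0 : (p - 1) * m = 0 := by omega
        rcases Nat.mul_eq_zero.1 h0 with h | h <;> omega
      subst ha1 hm
      obtain ⟨z, hz, n, hn⟩ := hu.eq_weyl
      rw [hn, Matrix.smul_mul]
      exact smul_pauli_mem_Cliff1_one p hz (Submonoid.mul_mem _ (weyl_diag_mem p n) hP)
    · refine ⟨?_, fun Q hQ => ?_⟩
      · rw [Matrix.mem_unitaryGroup_iff, Matrix.star_eq_conjTranspose,
          Matrix.conjTranspose_mul, Matrix.mul_assoc, ← Matrix.mul_assoc P,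
          pauli_unitary p hP, Matrix.one_mul, Matrix.diagonal_conjTranspose,
          Matrix.diagonal_mul_diagonal, ← Matrix.diagonal_one]
        congr 1
        funext j
        simp [Complex.mul_conj, Complex.normSq_eq_norm_sq, hu.norm_eq_one j]
      · obtain ⟨w, hw, hPQ⟩ := pauli_conj p hP hQ
        obtain ⟨s, hs⟩ := diagonal_conj_pauli p hQ
        have heq : Matrix.diagonal u * P * Q * (Matrix.diagonal u * P)ᴴ =
            Matrix.diagonal (fun j => w * (u j * star (u (j - s)))) * Q := by
          calc _ = Matrix.diagonal u * (P * Q * Pᴴ) * (Matrix.diagonal u)ᴴ := by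
                rw [Matrix.conjTranspose_mul]; simp only [Matrix.mul_assoc]
            _ = w • (Matrix.diagonal u * Q * (Matrix.diagonal u)ᴴ) := by
                rw [hPQ, Matrix.mul_smul, Matrix.smul_mul]
            _ = _ := by
                rw [hs, ← Matrix.smul_mul, ← Matrix.diagonal_smul]
                rfl
        rw [heq]
        obtain ⟨a, rfl⟩ : ∃ b, a = b + 1 := ⟨a - 1, by omega⟩
        have hd := (hu.diff s).const_mul hw
        rcases Nat.eq_zero_or_pos a with rfl | hapos
        · -- Degree zero at `m + 1` is degree `p - 1` at `m`; the level `≥ 2` forces `m ≥ 1` here.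
          obtain ⟨m, rfl⟩ : ∃ m', m = m' + 1 := by
            refine ⟨m - 1, ?_⟩
            rcases m with _ | m
            · simp at hk
            · simp
          refine ih m (p - 1) (by omega) ?_ _ hd.descend Q hQ
          rw [Nat.mul_succ] at hk
          omega
        · exact ih m a hapos (by omega) _ hd Q hQ

/-! ### The groups `D_{m,a}` consist of polynomial phases -/

lemma closure_Uma_phase (p : ℕ) [Fact p.Prime] (m a : ℕ) {G : Matrix (ZMod p) (ZMod p) ℂ}
    (hG : G ∈ Submonoid.closure {V | ∃ b, 1 ≤ b ∧ b ≤ a ∧ V = Uma p m b}) :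
    ∃ f : ZMod p → ℤ, ∃ Q : Polynomial (ZMod p), Q.natDegree ≤ a ∧
      (∀ j, (f j : ZMod p) = Q.eval j) ∧ G = Matrix.diagonal fun j =>
        Complex.exp (2 * Real.pi * Complex.I * ((f j : ℂ) / (p : ℂ) ^ m)) := by
  induction hG using Submonoid.closure_induction with
  | mem x hx =>
    obtain ⟨b, -, hb, rfl⟩ := hx
    refine ⟨fun j => (j.val : ℤ) ^ b, Polynomial.X ^ b, by simpa using hb, by simp, ?_⟩
    ext r c
    by_cases h : r = c
    · subst h; simp [Uma]
    · simp [Uma, h]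
  | one => exact ⟨0, 0, by simp, by simp, by simp⟩
  | mul x y _ _ hx hy =>
    obtain ⟨f, Q, hQ, hf, rfl⟩ := hx
    obtain ⟨g, R, hR, hg, rfl⟩ := hy
    refine ⟨f + g, Q + R, Polynomial.natDegree_add_le_of_degree_le hQ hR,
      fun j => by simp [hf, hg], ?_⟩
    rw [Matrix.diagonal_mul_diagonal]
    congr 1
    funext j
    rw [← Complex.exp_add]
    congr 1
    simp only [Pi.add_apply]
    push_cast
    ring

lemma Dgrp_phasePoly (p : ℕ) [Fact p.Prime] (m : ℕ) :
    ∀ (a : ℕ) (U : Matrix (ZMod p) (ZMod p) ℂ), U ∈ Dgrp p m a →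
      ∃ u, PhasePoly p m a u ∧ U = Matrix.diagonal u := by
  have hp0 : (p : ℂ) ≠ 0 := Nat.cast_ne_zero.2 (Fact.out : p.Prime).ne_zero
  induction m with
  | zero =>
    rintro a U ⟨φ, rfl⟩
    refine ⟨fun _ => Complex.exp (φ * Complex.I),
      ⟨_, Complex.norm_exp_ofReal_mul_I φ, 0, 0, by simp, by simp, by simp⟩, ?_⟩
    ext r c
    simp [Matrix.diagonal_apply, Matrix.one_apply]
  | succ m ih =>
    rintro a U ⟨G, hG, φ, D, hD, rfl⟩
    obtain ⟨f, Q, hQ, hf, rfl⟩ := closure_Uma_phase p (m + 1) a hG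
    obtain ⟨v, ⟨z, hz, g, R, -, -, hv⟩, rfl⟩ := ih _ _ hD
    -- The factor from `D_{m,p-1}` has exponent `p g / p^(m+1)`, which is invisible mod `p`.
    refine ⟨_, ⟨Complex.exp (φ * Complex.I) * z, by simp [hz, Complex.norm_exp_ofReal_mul_I],
      fun j => f j + p * g j, Q, hQ, fun j => by simp [hf], fun j => rfl⟩, ?_⟩
    rw [Matrix.diagonal_mul_diagonal, ← Matrix.diagonal_smul]
    congr 1
    funext j
    simp only [Pi.smul_apply, smul_eq_mul, hv]
    rw [show ((f j + p * g j : ℤ) : ℂ) / (p : ℂ) ^ (m + 1) =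
        (f j : ℂ) / (p : ℂ) ^ (m + 1) + (g j : ℂ) / (p : ℂ) ^ m by
        push_cast; field_simp; ring,
      mul_add, Complex.exp_add]
    ring

/-- For a single qudit of prime dimension `p`, every `m ≥ 1` and every
`a` with `1 ≤ a ≤ p-1`, the group `D_{m,a}` is contained in the set `C^{(p-1)(m-1)+a}_d`
of diagonal gates in level `(p-1)(m-1)+a` of the Clifford hierarchy. -/
theorem Dgrp_subset_diagonal_clifford (p m a : ℕ) [NeZero p] (hp : p.Prime) (hm : 1 ≤ m)
    (ha1 : 1 ≤ a) (ha2 : a ≤ p - 1) :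
    Dgrp p m a ⊆ CliffD1 p ((p - 1) * (m - 1) + a) := by
  have : Fact p.Prime := ⟨hp⟩
  intro U hU
  obtain ⟨u, hu, rfl⟩ := Dgrp_phasePoly p m a U hU
  obtain ⟨m, rfl⟩ : ∃ m', m = m' + 1 := ⟨m - 1, by omega⟩
  refine ⟨?_, Matrix.isDiag_diagonal u⟩
  have h := PhasePoly.diagonal_mul_pauli_mem _ m a ha1 rfl u hu 1 (Submonoid.one_mem _)
  rwa [Matrix.mul_one] at h
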